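/- Construction of a nested family of sub-intrinsic cylinders: let $n \ge 2$, $p \in \big(\tfrac{2n}{n+2}, 2\big)$, let $(t_0,x_0) \in \mathbb{R} \times \mathbb{R}^n$, $S, R > 0$, set $Q_{S,R} := (t_0-S, t_0+S) \times B_R(x_0)$, let $f \in L^1(Q_{S,R})$, and let $\hat b \in (0, 1/2]$ with $\hat b < (n+2)p - 2n$. Set $\beta := 1 - 2\hat b$ and $\hat a := \hat b + \tfrac{2}{2p-(2-p)n}$. Then there exist a function $r : (0,S] \to (0,R]$, constants $c > 1$ and $K \ge 1$ depending only on $n$ and $p$, such that, writing $\lambda_s$ for the positive real with $\lambda_s^{2-p} = s/r(s)^2$ and $Q_s := (t_0-s, t_0+s) \times B_{r(s)}(x_0)$, the following hold for all $0 < s < \sigma \le S$ and $\gamma \in (0,1]$: (a) $r$ is continuous and strictly increasing, $r(s) \le (s/\sigma)^{\hat b} r(\sigma)$, and $r(s) \to 0$ as $s \to 0^+$; in particular $Q_s \subseteq Q_\sigma$; (b) $\fint_{Q_s} |f|\,dz \le \lambda_s^p$, i.e. each $Q_s$ is sub-intrinsic; (c) if $r(s) < (s/\sigma)^{\hat b}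 r(\sigma)$, then there exists $s_1 \in [s,\sigma)$ with $\lambda_{s_1}^p \le K \fint_{Q_{s_1}} |f|\,dz$, i.e. $Q_{s_1}$ is $K$-intrinsic; (d) if $\fint_{Q_a} |f|\,dz < \lambda_a^p / K$ for all $a \in (s_1, \sigma)$, then $\lambda_a^{2-p} \le (a/\sigma)^{\beta} \lambda_\sigma^{2-p}$ for all $a \in [s_1, \sigma]$; (e) $r(s) \le c\,\gamma^{-\hat a} r(\gamma s)$, $|Q_{\gamma s}|^{-1} \le c\,\gamma^{-n\hat a - 2} |Q_s|^{-1}$, and $\lambda_{\gamma s}^{2-p} \le c\,\gamma^{-\max\{2\hat a, \beta\}} \lambda_s^{2-p}$; (f) for every $c' > 1$ with $\tilde c := (c')^{1/\hat b}$ satisfying $\tilde c\, s \le S$, and $\bar c := \max\{\tilde c, \tilde c^{\hat a}\}$, one has $(t_0 - c's, t_0 + c's) \times B_{c' r(s)}(x_0) \subseteq Q_{\tilde c s} \subseteq (t_0 - \bar c s, t_0 + \bar c s) \times B_{\bar c\, r(s)}(x_0)$. -/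

import Mathlib

open MeasureTheory

/-- The space-time cylinder `(t₀-τ, t₀+τ) × B_ρ(x₀) ⊆ ℝ × ℝⁿ`. -/
def cyl (n : ℕ) (t₀ : ℝ) (x₀ : EuclideanSpace ℝ (Fin n)) (τ ρ : ℝ) :
    Set (ℝ × EuclideanSpace ℝ (Fin n)) :=
  Set.Ioo (t₀ - τ) (t₀ + τ) ×ˢ Metric.ball x₀ ρ

/-!
Multiplied through by the volume of the cylinder, sub-intrinsicality of `Q_{s,ρ}` becomes
`ρ ^ m * ∫_{Q_{s,ρ}} |f| ≤ C * s ^ k` with `m = (2p - (2-p)n) / (2-p)` and `k = 2 / (2-p)`. Take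
`r(s) = κ(s) s ^ b`, where `κ(s)` is the largest coefficient for which the whole curve
`a ↦ κ a ^ b`, `a ∈ [s, S]`, satisfies this constraint. Then `κ` is nondecreasing, and it can
increase strictly between `s` and `σ` only if, by compactness, the constraint is an equality at some
height in `[s, σ)`: that cylinder is intrinsic. Conversely, the left side scales at least like
`ρ ^ m`, so `κ(γs) ≥ γ ^ (k/m) κ(s)`. Hence `r` grows at a rate between `s ^ b` and
`s ^ (b + k/m) = s ^ â`, and this two-sided bound contains all the remaining claims.
-/

open Filter
open scoped Topology

section MaxLevel

variable {X : Type*} {Φ : X → ℝ → ℝ} {θ : X → ℝ} {M κ : ℝ} {T T' : Set X}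

/-- The levels `κ ∈ [0, M]` that satisfy the constraint `Φ a κ ≤ θ a` at every `a ∈ T`. -/
def admissibleLevels (Φ : X → ℝ → ℝ) (θ : X → ℝ) (M : ℝ) (T : Set X) : Set ℝ :=
  {κ ∈ Set.Icc 0 M | ∀ a ∈ T, Φ a κ ≤ θ a}

/-- The largest admissible level on `T`; a supremum, attained by `maxLevel_mem`. -/
noncomputable def maxLevel (Φ : X → ℝ → ℝ) (θ : X → ℝ) (M : ℝ) (T : Set X) : ℝ :=
  sSup (admissibleLevels Φ θ M T)

theorem le_maxLevel (hκ : κ ∈ admissibleLevels Φ θ M T) : κ ≤ maxLevel Φ θ M T :=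
  le_csSup ⟨M, fun _ h => h.1.2⟩ hκ

theorem admissibleLevels_anti (hT : T ⊆ T') :
    admissibleLevels Φ θ M T' ⊆ admissibleLevels Φ θ M T :=
  fun _ hκ => ⟨hκ.1, fun a ha => hκ.2 a (hT ha)⟩

theorem isClosed_admissibleLevels (hΦ : ∀ a ∈ T, Continuous (Φ a)) :
    IsClosed (admissibleLevels Φ θ M T) := by
  have : admissibleLevels Φ θ M T = Set.Icc 0 M ∩ ⋂ a ∈ T, {κ | Φ a κ ≤ θ a} := by
    ext κ
    simp only [admissibleLevels, Set.mem_ofPred_eq, Set.mem_inter_iff, Set.mem_iInter]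
  rw [this]
  exact isClosed_Icc.inter <|
    isClosed_biInter fun a ha => isClosed_le (hΦ a ha) continuous_const

theorem maxLevel_mem (hM : 0 ≤ M) (hΦ : ∀ a ∈ T, Continuous (Φ a))
    (h0 : ∀ a ∈ T, Φ a 0 ≤ θ a) : maxLevel Φ θ M T ∈ admissibleLevels Φ θ M T :=
  (isClosed_admissibleLevels hΦ).csSup_mem ⟨0, ⟨le_rfl, hM⟩, h0⟩ ⟨M, fun _ h => h.1.2⟩

variable [TopologicalSpace X]

theorem lt_maxLevel (hT : IsCompact T) (hΦ : Continuous (Function.uncurry Φ))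
    (hθ : Continuous θ) (hκ : κ ∈ Set.Ico 0 M) (hlt : ∀ a ∈ T, Φ a κ < θ a) :
    κ < maxLevel Φ θ M T := by
  have hslack : ∀ᶠ κ' in 𝓝 κ, ∀ a ∈ T, Φ a κ' < θ a :=
    hT.eventually_forall_of_forall_eventually fun a ha =>
      ((hΦ.comp continuous_swap).tendsto (κ, a)).eventually_lt
        ((hθ.comp continuous_snd).tendsto (κ, a)) (hlt a ha)
  obtain ⟨κ', ⟨hκ', hM⟩, hκκ'⟩ := (((hslack.and (eventually_lt_nhds hκ.2)).filter_mono
    nhdsWithin_le_nhds).and (self_mem_nhdsWithin (s := Set.Ioi κ))).exists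
  have hκκ' : κ < κ' := hκκ'
  exact hκκ'.trans_le <|
    le_maxLevel ⟨⟨hκ.1.trans hκκ'.le, hM.le⟩, fun a ha => (hκ' a ha).le⟩

theorem exists_mem_diff_le_of_maxLevel_lt (hT : IsCompact T)
    (hΦ : Continuous (Function.uncurry Φ)) (hθ : Continuous θ) (hM : 0 ≤ M)
    (h0 : ∀ a ∈ T ∪ T', Φ a 0 ≤ θ a)
    (hstrict : ∀ a ∈ T', ∀ κ κ', 0 ≤ κ → κ < κ' → Φ a κ' ≤ θ a → Φ a κ < θ a)
    (hlt : maxLevel Φ θ M T < maxLevel Φ θ M T') :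
    ∃ a ∈ T \ T', θ a ≤ Φ a (maxLevel Φ θ M T) := by
  have hΦ' : ∀ a, Continuous (Φ a) := fun a => hΦ.comp (Continuous.prodMk_right a)
  have hmem := maxLevel_mem hM (fun a _ => hΦ' a) fun a ha => h0 a (.inl ha)
  have hmem' := maxLevel_mem hM (fun a _ => hΦ' a) fun a ha => h0 a (.inr ha)
  by_contra! hslack
  refine (lt_maxLevel hT hΦ hθ ⟨hmem.1.1, hlt.trans_le hmem'.1.2⟩ fun a ha => ?_).false
  by_cases haT' : a ∈ T'
  · exact hstrict a haT' _ _ hmem.1.1 hlt (hmem'.2 a haT')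
  · exact hslack a ⟨ha, haT'⟩

end MaxLevel

/-- A function `h` of a height `a` and a radius `ρ ≥ 0` that is nondecreasing in `a` and grows at
least like `ρ ^ m` in `ρ`; the model is `ρ ^ m` times the mass of the cylinder of height `a` and
radius `ρ`. -/
structure IsSuperhomogeneous (h : ℝ → ℝ → ℝ) (m : ℝ) : Prop where
  continuous : Continuous (Function.uncurry h)
  nonneg : ∀ a {ρ : ℝ}, 0 ≤ ρ → 0 ≤ h a ρ
  apply_mul_le : ∀ {a a' δ ρ : ℝ}, a ≤ a' → δ ∈ Set.Icc (0 : ℝ) 1 → 0 ≤ ρ →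
    h a (δ * ρ) ≤ δ ^ m * h a' ρ

namespace IsSuperhomogeneous

variable {h : ℝ → ℝ → ℝ} {m a a' ρ ρ' t : ℝ}

theorem apply_zero_le (hh : IsSuperhomogeneous h m) (hm : 0 < m) : h a 0 ≤ 0 := by
  simpa only [zero_mul, Real.zero_rpow hm.ne'] using
    hh.apply_mul_le (le_refl a) (Set.left_mem_Icc.mpr zero_le_one) (le_refl 0)

theorem le_div_rpow_mul (hh : IsSuperhomogeneous h m) (ha : a ≤ a') (hρ : 0 ≤ ρ)
    (hρρ' : ρ ≤ ρ') : h a ρ ≤ (ρ / ρ') ^ m * h a' ρ' := by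
  have hρ' := hρ.trans hρρ'
  have hcancel : ρ / ρ' * ρ' = ρ := div_mul_cancel_of_imp fun h0 => le_antisymm (h0 ▸ hρρ') hρ
  have hscale := hh.apply_mul_le ha ⟨div_nonneg hρ hρ', div_le_one_of_le₀ hρρ' hρ'⟩ hρ'
  rwa [hcancel] at hscale

theorem mono (hh : IsSuperhomogeneous h m) (hm : 0 < m) (ha : a ≤ a') (hρ : 0 ≤ ρ)
    (hρρ' : ρ ≤ ρ') : h a ρ ≤ h a' ρ' := by
  have hρ' := hρ.trans hρρ'
  exact (hh.le_div_rpow_mul ha hρ hρρ').trans <| mul_le_of_le_one_left (hh.nonneg _ hρ') <|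
    Real.rpow_le_one (div_nonneg hρ hρ') (div_le_one_of_le₀ hρρ' hρ') hm.le

theorem lt_of_lt_of_le (hh : IsSuperhomogeneous h m) (hm : 0 < m) (hρ : 0 ≤ ρ) (hρρ' : ρ < ρ')
    (ht : 0 < t) (hle : h a ρ' ≤ t) : h a ρ < t := by
  have hρ' := hρ.trans_lt hρρ'
  have hδ := div_nonneg hρ hρ'.le
  calc h a ρ ≤ (ρ / ρ') ^ m * h a ρ' := hh.le_div_rpow_mul le_rfl hρ hρρ'.le
    _ ≤ (ρ / ρ') ^ m * t := mul_le_mul_of_nonneg_left hle (Real.rpow_nonneg hδ m)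
    _ < t := mul_lt_of_lt_one_left ht (Real.rpow_lt_one hδ ((div_lt_one hρ').mpr hρρ') hm)

theorem continuous_apply_mul_rpow (hh : IsSuperhomogeneous h m) {b : ℝ} (hb : 0 < b) :
    Continuous (Function.uncurry fun a κ : ℝ => h a (κ * a ^ b)) :=
  hh.continuous.comp <| continuous_fst.prodMk <|
    continuous_snd.mul (continuous_fst.rpow_const fun _ => .inr hb.le)

end IsSuperhomogeneous

/-- `r` is positive on `(0, S]` and grows there at a rate between `s ^ b` and `s ^ e`. -/
structure HasPowerGrowth (r : ℝ → ℝ) (S b e : ℝ) : Prop where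
  pos : ∀ {s : ℝ}, s ∈ Set.Ioc 0 S → 0 < r s
  apply_mul_le : ∀ {s γ : ℝ}, s ∈ Set.Ioc 0 S → γ ∈ Set.Ioc (0 : ℝ) 1 → r (γ * s) ≤ γ ^ b * r s
  rpow_mul_le : ∀ {s γ : ℝ}, s ∈ Set.Ioc 0 S → γ ∈ Set.Ioc (0 : ℝ) 1 → γ ^ e * r s ≤ r (γ * s)

section CriticalRadius

/-- The largest coefficient `κ ≤ R / S ^ b` for which the curve of radii `a ↦ κ * a ^ b` satisfies
`h a (κ * a ^ b) ≤ C * a ^ k` at every height `a ∈ [s, S]`. -/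
noncomputable def criticalCoeff (h : ℝ → ℝ → ℝ) (C k b R S s : ℝ) : ℝ :=
  maxLevel (fun a κ => h a (κ * a ^ b)) (fun a => C * a ^ k) (R / S ^ b) (Set.Icc s S)

/-- The radius at height `s` on the critical curve `a ↦ criticalCoeff h C k b R S s * a ^ b`. -/
noncomputable def criticalRadius (h : ℝ → ℝ → ℝ) (C k b R S s : ℝ) : ℝ :=
  criticalCoeff h C k b R S s * s ^ b

variable {h : ℝ → ℝ → ℝ} {m C k b R S s σ γ : ℝ}

theorem apply_zero_mul_rpow_lt (hh : IsSuperhomogeneous h m) (hm : 0 < m) (hC : 0 < C)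
    (hs : 0 < s) : h s (0 * s ^ b) < C * s ^ k := by
  rw [zero_mul]
  exact (hh.apply_zero_le hm).trans_lt (mul_pos hC (Real.rpow_pos_of_pos hs k))

theorem criticalCoeff_mem (hh : IsSuperhomogeneous h m) (hm : 0 < m) (hC : 0 < C) (hb : 0 < b)
    (hR : 0 < R) (hs : s ∈ Set.Ioc 0 S) :
    criticalCoeff h C k b R S s ∈ admissibleLevels (fun a κ => h a (κ * a ^ b))
      (fun a => C * a ^ k) (R / S ^ b) (Set.Icc s S) :=
  maxLevel_mem (div_nonneg hR.le (Real.rpow_nonneg (hs.1.le.trans hs.2) b))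
    (fun a _ => (hh.continuous_apply_mul_rpow hb).comp (Continuous.prodMk_right a))
    fun _ ha => (apply_zero_mul_rpow_lt hh hm hC (hs.1.trans_le ha.1)).le

theorem criticalCoeff_pos (hh : IsSuperhomogeneous h m) (hm : 0 < m) (hC : 0 < C) (hk : 0 < k)
    (hb : 0 < b) (hR : 0 < R) (hs : s ∈ Set.Ioc 0 S) : 0 < criticalCoeff h C k b R S s :=
  lt_maxLevel isCompact_Icc (hh.continuous_apply_mul_rpow hb)
    (continuous_const.mul (continuous_id.rpow_const fun _ => .inr hk.le))
    ⟨le_rfl, div_pos hR (Real.rpow_pos_of_pos (hs.1.trans_le hs.2) b)⟩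
    fun _ ha => apply_zero_mul_rpow_lt hh hm hC (hs.1.trans_le ha.1)

theorem criticalCoeff_mono (hh : IsSuperhomogeneous h m) (hm : 0 < m) (hC : 0 < C) (hb : 0 < b)
    (hR : 0 < R) (hs : 0 < s) (hsσ : s ≤ σ) (hσ : σ ≤ S) :
    criticalCoeff h C k b R S s ≤ criticalCoeff h C k b R S σ :=
  le_maxLevel <| admissibleLevels_anti (Set.Icc_subset_Icc_left hsσ) <|
    criticalCoeff_mem hh hm hC hb hR ⟨hs, hsσ.trans hσ⟩

theorem rpow_mul_criticalCoeff_le (hh : IsSuperhomogeneous h m) (hm : 0 < m) (hC : 0 < C)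
    (hk : 0 < k) (hb : 0 < b) (hR : 0 < R) (hs : s ∈ Set.Ioc 0 S) (hγ : γ ∈ Set.Ioc (0 : ℝ) 1) :
    γ ^ (k / m) * criticalCoeff h C k b R S s ≤ criticalCoeff h C k b R S (γ * s) := by
  obtain ⟨⟨hκ0, hκM⟩, hκ⟩ := criticalCoeff_mem (k := k) hh hm hC hb hR hs
  set κ := criticalCoeff h C k b R S s
  obtain ⟨hγ0, hγ1⟩ := hγ
  have hδ0 : 0 ≤ γ ^ (k / m) := Real.rpow_nonneg hγ0.le _
  have hδ1 : γ ^ (k / m) ≤ 1 := Real.rpow_le_one hγ0.le hγ1 (div_pos hk hm).le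
  refine le_maxLevel ⟨⟨mul_nonneg hδ0 hκ0, (mul_le_of_le_one_left hκ0 hδ1).trans hκM⟩,
    fun a ha => ?_⟩
  have ha0 : 0 < a := (mul_pos hγ0 hs.1).trans_le ha.1
  let σ := max a s
  have haσ : a ≤ σ := le_max_left a s
  have hσ0 : 0 < σ := ha0.trans_le haσ
  have hγσ : γ * σ ≤ a := by
    rw [mul_max_of_nonneg _ _ hγ0.le]
    exact max_le (mul_le_of_le_one_left ha0.le hγ1) ha.1
  calc h a (γ ^ (k / m) * κ * a ^ b)
      ≤ h a (γ ^ (k / m) * (κ * σ ^ b)) := by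
        rw [mul_assoc]
        exact hh.mono hm le_rfl (by positivity) (by gcongr)
    _ ≤ (γ ^ (k / m)) ^ m * h σ (κ * σ ^ b) :=
        hh.apply_mul_le haσ ⟨hδ0, hδ1⟩ (by positivity)
    _ ≤ (γ ^ (k / m)) ^ m * (C * σ ^ k) := by
        gcongr
        exact hκ σ ⟨le_max_right a s, max_le ha.2 hs.2⟩
    _ = C * (γ * σ) ^ k := by
        rw [← Real.rpow_mul hγ0.le, div_mul_cancel₀ _ hm.ne', Real.mul_rpow hγ0.le hσ0.le]
        ring
    _ ≤ C * a ^ k := by gcongr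

theorem criticalRadius_le (hh : IsSuperhomogeneous h m) (hm : 0 < m) (hC : 0 < C) (hb : 0 < b)
    (hR : 0 < R) (hs : s ∈ Set.Ioc 0 S) : criticalRadius h C k b R S s ≤ R := by
  have hκ := (criticalCoeff_mem (k := k) hh hm hC hb hR hs).1
  have hS := Real.rpow_pos_of_pos (hs.1.trans_le hs.2) b
  calc criticalRadius h C k b R S s ≤ criticalCoeff h C k b R S s * S ^ b :=
        mul_le_mul_of_nonneg_left (Real.rpow_le_rpow hs.1.le hs.2 hb.le) hκ.1
    _ ≤ R := (le_div_iff₀ hS).mp hκ.2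

theorem apply_criticalRadius_le (hh : IsSuperhomogeneous h m) (hm : 0 < m) (hC : 0 < C)
    (hb : 0 < b) (hR : 0 < R) (hs : s ∈ Set.Ioc 0 S) :
    h s (criticalRadius h C k b R S s) ≤ C * s ^ k :=
  (criticalCoeff_mem hh hm hC hb hR hs).2 s ⟨le_rfl, hs.2⟩

theorem hasPowerGrowth_criticalRadius (hh : IsSuperhomogeneous h m) (hm : 0 < m) (hC : 0 < C)
    (hk : 0 < k) (hb : 0 < b) (hR : 0 < R) :
    HasPowerGrowth (criticalRadius h C k b R S) S b (b + k / m) where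
  pos hs := mul_pos (criticalCoeff_pos hh hm hC hk hb hR hs) (Real.rpow_pos_of_pos hs.1 b)
  apply_mul_le {s γ} hs hγ := by
    have hmono := criticalCoeff_mono (k := k) hh hm hC hb hR (mul_pos hγ.1 hs.1)
      (mul_le_of_le_one_left hs.1.le hγ.2) hs.2
    calc criticalCoeff h C k b R S (γ * s) * (γ * s) ^ b
        ≤ criticalCoeff h C k b R S s * (γ * s) ^ b :=
          mul_le_mul_of_nonneg_right hmono (Real.rpow_nonneg (mul_pos hγ.1 hs.1).le b)
      _ = γ ^ b * (criticalCoeff h C k b R S s * s ^ b) := by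
          rw [Real.mul_rpow hγ.1.le hs.1.le]
          ring
  rpow_mul_le {s γ} hs hγ := by
    calc γ ^ (b + k / m) * (criticalCoeff h C k b R S s * s ^ b)
        = γ ^ (k / m) * criticalCoeff h C k b R S s * (γ * s) ^ b := by
          rw [Real.rpow_add hγ.1, Real.mul_rpow hγ.1.le hs.1.le]
          ring
      _ ≤ criticalCoeff h C k b R S (γ * s) * (γ * s) ^ b :=
          mul_le_mul_of_nonneg_right (rpow_mul_criticalCoeff_le hh hm hC hk hb hR hs hγ)
            (Real.rpow_nonneg (mul_pos hγ.1 hs.1).le b)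

theorem exists_le_apply_criticalRadius (hh : IsSuperhomogeneous h m) (hm : 0 < m) (hC : 0 < C)
    (hk : 0 < k) (hb : 0 < b) (hR : 0 < R) (hs : 0 < s) (hsσ : s < σ) (hσ : σ ≤ S)
    (hlt : criticalRadius h C k b R S s < (s / σ) ^ b * criticalRadius h C k b R S σ) :
    ∃ a ∈ Set.Ico s σ, C * a ^ k ≤ h a (criticalRadius h C k b R S a) := by
  have hσ0 : 0 < σ := hs.trans hsσ
  have hcoeff : criticalCoeff h C k b R S s < criticalCoeff h C k b R S σ := by
    have hcancel : (s / σ) ^ b * criticalRadius h C k b R S σ =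
        criticalCoeff h C k b R S σ * s ^ b := by
      rw [criticalRadius, mul_left_comm, ← Real.mul_rpow (by positivity) hσ0.le,
        div_mul_cancel₀ _ hσ0.ne']
    rw [hcancel] at hlt
    exact lt_of_mul_lt_mul_right hlt (Real.rpow_nonneg hs.le b)
  have hM : 0 ≤ R / S ^ b := div_nonneg hR.le (Real.rpow_nonneg (hσ0.le.trans hσ) b)
  obtain ⟨a, ⟨⟨hsa, haS⟩, haσ⟩, hle⟩ := exists_mem_diff_le_of_maxLevel_lt isCompact_Icc
    (hh.continuous_apply_mul_rpow hb)
    (continuous_const.mul (continuous_id.rpow_const fun _ => .inr hk.le)) hM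
    (fun a ha => (apply_zero_mul_rpow_lt hh hm hC <|
      ha.elim (hs.trans_le ·.1) (hσ0.trans_le ·.1)).le)
    (fun a ha κ κ' hκ hκκ' hle => by
      have ha0 : 0 < a := hσ0.trans_le ha.1
      exact hh.lt_of_lt_of_le hm (by positivity) (by gcongr)
        (mul_pos hC (Real.rpow_pos_of_pos ha0 k)) hle)
    hcoeff
  have ha0 : 0 < a := hs.trans_le hsa
  refine ⟨a, ⟨hsa, not_le.mp fun hσa => haσ ⟨hσa, haS⟩⟩, hle.trans (hh.mono hm le_rfl ?_ ?_)⟩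
  · exact mul_nonneg (criticalCoeff_pos hh hm hC hk hb hR ⟨hs, hsa.trans haS⟩).le
      (Real.rpow_nonneg ha0.le b)
  · exact mul_le_mul_of_nonneg_right (criticalCoeff_mono hh hm hC hb hR hs hsa haS)
      (Real.rpow_nonneg ha0.le b)

end CriticalRadius

namespace HasPowerGrowth

variable {r : ℝ → ℝ} {S b e s σ s₁ γ μ : ℝ}

theorem le_div_rpow_mul (hr : HasPowerGrowth r S b e) (hs : 0 < s) (hsσ : s ≤ σ) (hσ : σ ≤ S) :
    r s ≤ (s / σ) ^ b * r σ := by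
  have hσ0 := hs.trans_le hsσ
  have h := hr.apply_mul_le ⟨hσ0, hσ⟩ ⟨div_pos hs hσ0, (div_le_one hσ0).mpr hsσ⟩
  rwa [div_mul_cancel₀ _ hσ0.ne'] at h

theorem div_rpow_mul_le (hr : HasPowerGrowth r S b e) (hs : 0 < s) (hsσ : s ≤ σ) (hσ : σ ≤ S) :
    (s / σ) ^ e * r σ ≤ r s := by
  have hσ0 := hs.trans_le hsσ
  have h := hr.rpow_mul_le ⟨hσ0, hσ⟩ ⟨div_pos hs hσ0, (div_le_one hσ0).mpr hsσ⟩
  rwa [div_mul_cancel₀ _ hσ0.ne'] at h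

theorem rpow_mul_le_of_one_le (hr : HasPowerGrowth r S b e) (hs : 0 < s) (hμ : 1 ≤ μ)
    (hμS : μ * s ≤ S) : μ ^ b * r s ≤ r (μ * s) := by
  have hμ0 := one_pos.trans_le hμ
  have h := hr.apply_mul_le ⟨mul_pos hμ0 hs, hμS⟩ ⟨inv_pos.mpr hμ0, inv_le_one_of_one_le₀ hμ⟩
  rwa [inv_mul_cancel_left₀ hμ0.ne', Real.inv_rpow hμ0.le,
    le_inv_mul_iff₀ (Real.rpow_pos_of_pos hμ0 b)] at h

theorem apply_mul_le_of_one_le (hr : HasPowerGrowth r S b e) (hs : 0 < s) (hμ : 1 ≤ μ)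
    (hμS : μ * s ≤ S) : r (μ * s) ≤ μ ^ e * r s := by
  have hμ0 := one_pos.trans_le hμ
  have h := hr.rpow_mul_le ⟨mul_pos hμ0 hs, hμS⟩ ⟨inv_pos.mpr hμ0, inv_le_one_of_one_le₀ hμ⟩
  rwa [inv_mul_cancel_left₀ hμ0.ne', Real.inv_rpow hμ0.le,
    inv_mul_le_iff₀ (Real.rpow_pos_of_pos hμ0 e)] at h

theorem mem_uIcc (hr : HasPowerGrowth r S b e) (hs : s ∈ Set.Ioc 0 S) (hσ : σ ∈ Set.Ioc 0 S) :
    r s ∈ Set.uIcc ((s / σ) ^ b * r σ) ((s / σ) ^ e * r σ) := by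
  rcases le_total s σ with hsσ | hσs
  · exact Set.mem_uIcc_of_ge (hr.div_rpow_mul_le hs.1 hsσ hσ.2) (hr.le_div_rpow_mul hs.1 hsσ hσ.2)
  · have hcancel : s / σ * σ = s := div_mul_cancel₀ _ hσ.1.ne'
    have hμ : 1 ≤ s / σ := (one_le_div hσ.1).mpr hσs
    have hμS : s / σ * σ ≤ S := hcancel.trans_le hs.2
    have hlower := hr.rpow_mul_le_of_one_le hσ.1 hμ hμS
    have hupper := hr.apply_mul_le_of_one_le hσ.1 hμ hμS
    rw [hcancel] at hlower hupper
    exact Set.mem_uIcc_of_le hlower hupper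

theorem continuousOn (hr : HasPowerGrowth r S b e) : ContinuousOn r (Set.Ioc 0 S) := by
  intro σ hσ
  have hpow (a : ℝ) : Tendsto (fun s => (s / σ) ^ a * r σ) (𝓝[Set.Ioc 0 S] σ) (𝓝 (r σ)) := by
    have hcont : ContinuousAt (fun s => (s / σ) ^ a * r σ) σ :=
      ((continuousAt_id.div_const σ).rpow_const
        (.inl (div_ne_zero hσ.1.ne' hσ.1.ne'))).mul_const _
    have hσσ : (σ / σ) ^ a * r σ = r σ := by rw [div_self hσ.1.ne', Real.one_rpow, one_mul]
    simpa only [hσσ] using hcont.tendsto.mono_left (nhdsWithin_le_nhds (s := Set.Ioc 0 S))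
  have hmin := (hpow b).min (hpow e)
  have hmax := (hpow b).max (hpow e)
  rw [min_self] at hmin
  rw [max_self] at hmax
  refine tendsto_of_tendsto_of_tendsto_of_le_of_le' hmin hmax ?_ ?_
  · filter_upwards [self_mem_nhdsWithin] with s hs using (hr.mem_uIcc hs hσ).1
  · filter_upwards [self_mem_nhdsWithin] with s hs using (hr.mem_uIcc hs hσ).2

theorem strictMonoOn (hr : HasPowerGrowth r S b e) (hb : 0 < b) :
    StrictMonoOn r (Set.Ioc 0 S) := fun _ hs _ hσ hsσ =>
  (hr.le_div_rpow_mul hs.1 hsσ.le hσ.2).trans_lt <| mul_lt_of_lt_one_left (hr.pos hσ) <|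
    Real.rpow_lt_one (div_nonneg hs.1.le hσ.1.le) ((div_lt_one hσ.1).mpr hsσ) hb

theorem tendsto_zero (hr : HasPowerGrowth r S b e) (hb : 0 < b) :
    Tendsto r (𝓝[Set.Ioc 0 S] 0) (𝓝 0) := by
  have hcont : Continuous fun s => (s / S) ^ b * r S :=
    ((continuous_id.div_const S).rpow_const fun _ => .inr hb.le).mul_const _
  have hlim : Tendsto (fun s => (s / S) ^ b * r S) (𝓝[Set.Ioc 0 S] 0) (𝓝 0) := by
    simpa only [zero_div, Real.zero_rpow hb.ne', zero_mul] using
      (hcont.tendsto 0).mono_left nhdsWithin_le_nhds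
  refine tendsto_of_tendsto_of_tendsto_of_le_of_le' tendsto_const_nhds hlim ?_ ?_
  · filter_upwards [self_mem_nhdsWithin] with s hs using (hr.pos hs).le
  · filter_upwards [self_mem_nhdsWithin] with s hs using hr.le_div_rpow_mul hs.1 hs.2 le_rfl

theorem le_rpow_neg_mul (hr : HasPowerGrowth r S b e) (hs : s ∈ Set.Ioc 0 S)
    (hγ : γ ∈ Set.Ioc (0 : ℝ) 1) : r s ≤ γ ^ (-e) * r (γ * s) := by
  rw [Real.rpow_neg hγ.1.le, le_inv_mul_iff₀ (Real.rpow_pos_of_pos hγ.1 e)]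
  exact hr.rpow_mul_le hs hγ

theorem div_rpow_mul_le_of_forall_Ioo (hr : HasPowerGrowth r S b e) (hb : 0 < b) (hs₁ : 0 < s₁)
    (hs₁σ : s₁ < σ) (hσ : σ ≤ S) (hIoo : ∀ a ∈ Set.Ioo s₁ σ, (a / σ) ^ b * r σ ≤ r a) :
    ∀ a ∈ Set.Icc s₁ σ, (a / σ) ^ b * r σ ≤ r a := by
  have hpow : Continuous fun a => (a / σ) ^ b * r σ :=
    ((continuous_id.div_const σ).rpow_const fun _ => .inr hb.le).mul_const _
  rw [← closure_Ioo hs₁σ.ne]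
  refine fun a ha => le_on_closure hIoo hpow.continuousOn (hr.continuousOn.mono ?_) ha
  rw [closure_Ioo hs₁σ.ne]
  exact fun a ha => ⟨hs₁.trans_le ha.1, ha.2.trans hσ⟩

end HasPowerGrowth

theorem mul_div_sq_le_rpow_mul {γ s x y e : ℝ} (hγ : 0 < γ) (hs : 0 ≤ s) (hx : 0 < x)
    (hxy : γ ^ e * x ≤ y) : γ * s / y ^ 2 ≤ γ ^ (1 - 2 * e) * (s / x ^ 2) := by
  have hexp : γ ^ (1 - 2 * e) = γ / (γ ^ e) ^ 2 := by
    rw [Real.rpow_sub hγ, Real.rpow_one, mul_comm, Real.rpow_mul hγ.le, Real.rpow_two]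
  calc γ * s / y ^ 2 ≤ γ * s / (γ ^ e * x) ^ 2 := by gcongr
    _ = γ ^ (1 - 2 * e) * (s / x ^ 2) := by rw [hexp, mul_pow, div_mul_div_comm]

theorem mul_mem_Ioc_of_mem_Ioc_one {γ s S : ℝ} (hs : s ∈ Set.Ioc 0 S)
    (hγ : γ ∈ Set.Ioc (0 : ℝ) 1) : γ * s ∈ Set.Ioc 0 S :=
  ⟨mul_pos hγ.1 hs.1, (mul_le_of_le_one_left hs.1.le hγ.2).trans hs.2⟩

theorem rpow_le_mul_rpow_of_exponent_ge {γ c x y : ℝ} (hγ : γ ∈ Set.Ioc (0 : ℝ) 1) (hyx : y ≤ x)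
    (hc : 1 ≤ c) : γ ^ x ≤ c * γ ^ y :=
  (Real.rpow_le_rpow_of_exponent_ge hγ.1 hγ.2 hyx).trans <|
    le_mul_of_one_le_left (Real.rpow_nonneg hγ.1.le y) hc

section Cylinder

variable {n : ℕ} {t₀ τ τ' ρ ρ' : ℝ} {x₀ : EuclideanSpace ℝ (Fin n)}

theorem measurableSet_cyl : MeasurableSet (cyl n t₀ x₀ τ ρ) :=
  measurableSet_Ioo.prod measurableSet_ball

theorem cyl_subset_cyl (hτ : τ ≤ τ') (hρ : ρ ≤ ρ') : cyl n t₀ x₀ τ ρ ⊆ cyl n t₀ x₀ τ' ρ' :=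
  Set.prod_mono (Set.Ioo_subset_Ioo (by linarith) (by linarith)) (Metric.ball_subset_ball hρ)

theorem volume_cyl (hτ : 0 < τ) (hρ : 0 < ρ) :
    volume (cyl n t₀ x₀ τ ρ) = ENNReal.ofReal (τ * ρ ^ n) * volume (cyl n 0 0 1 1) := by
  simp only [cyl, Measure.volume_eq_prod, Measure.prod_prod, Real.volume_Ioo]
  rw [Measure.addHaar_ball_of_pos volume x₀ hρ, finrank_euclideanSpace_fin,
    ENNReal.ofReal_mul hτ.le, show t₀ + τ - (t₀ - τ) = τ * (0 + 1 - (0 - 1)) by ring,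
    ENNReal.ofReal_mul hτ.le]
  ring

theorem volume_cyl_ne_top : volume (cyl n t₀ x₀ τ ρ) ≠ ⊤ := by
  rw [cyl, Measure.volume_eq_prod, Measure.prod_prod]
  exact ENNReal.mul_ne_top measure_Ioo_lt_top.ne measure_ball_lt_top.ne

theorem volume_real_unit_cyl_pos : 0 < volume.real (cyl n 0 0 1 1) :=
  ENNReal.toReal_pos
    (((isOpen_Ioo.prod Metric.isOpen_ball).measure_pos volume
      ⟨0, by simp only [Prod.fst_zero, Set.mem_Ioo]; norm_num,
        Metric.mem_ball_self one_pos⟩).ne') volume_cyl_ne_top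

theorem setAverage_cyl (hτ : 0 < τ) (hρ : 0 < ρ) (f : ℝ × EuclideanSpace ℝ (Fin n) → ℝ) :
    (⨍ z in cyl n t₀ x₀ τ ρ, f z) =
      (∫ z in cyl n t₀ x₀ τ ρ, f z) / (τ * ρ ^ n * volume.real (cyl n 0 0 1 1)) := by
  rw [setAverage_eq, measureReal_def, volume_cyl hτ hρ, ENNReal.toReal_mul,
    ENNReal.toReal_ofReal (by positivity), ← measureReal_def, smul_eq_mul, inv_mul_eq_div]

theorem inv_volume_cyl_le {γ s x y e : ℝ} (hγ : 0 < γ) (hs : 0 < s) (hx : 0 < x)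
    (hy : 0 < y) (hxy : γ ^ e * x ≤ y) :
    (volume (cyl n t₀ x₀ (γ * s) y))⁻¹ ≤
      ENNReal.ofReal (γ ^ (-(n * e + 1))) * (volume (cyl n t₀ x₀ s x))⁻¹ := by
  have hexp : γ ^ (n * e + 1) = γ * (γ ^ e) ^ n := by
    rw [Real.rpow_add_one hγ.ne', mul_comm (n : ℝ), Real.rpow_mul_natCast hγ.le, mul_comm]
  have hvolume : ENNReal.ofReal (γ ^ (n * e + 1)) * volume (cyl n t₀ x₀ s x) ≤
      volume (cyl n t₀ x₀ (γ * s) y) := by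
    rw [volume_cyl hs hx, volume_cyl (mul_pos hγ hs) hy, ← mul_assoc,
      ← ENNReal.ofReal_mul (by positivity)]
    refine mul_le_mul' (ENNReal.ofReal_le_ofReal ?_) le_rfl
    calc γ ^ (n * e + 1) * (s * x ^ n) = γ * s * (γ ^ e * x) ^ n := by
          rw [hexp, mul_pow]
          ring
      _ ≤ γ * s * y ^ n := by gcongr
  have hpos : 0 < γ ^ (n * e + 1) := Real.rpow_pos_of_pos hγ _
  rw [Real.rpow_neg hγ.le, ENNReal.ofReal_inv_of_pos hpos, ← ENNReal.mul_inv
    (.inl (ENNReal.ofReal_pos.mpr hpos).ne') (.inl ENNReal.ofReal_ne_top)]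
  exact ENNReal.inv_le_inv.mpr hvolume

theorem ae_notMem_frontier_cyl (hn : n ≠ 0) :
    ∀ᵐ z : ℝ × EuclideanSpace ℝ (Fin n), |z.1 - t₀| ≠ τ ∧ dist z.2 x₀ ≠ ρ := by
  have : Nonempty (Fin n) := ⟨⟨0, Nat.pos_of_ne_zero hn⟩⟩
  have htime : ∀ᵐ t : ℝ, |t - t₀| ≠ τ :=
    measure_eq_zero_iff_ae_notMem.mp (Measure.addHaar_sphere volume t₀ τ)
  have hspace : ∀ᵐ x : EuclideanSpace ℝ (Fin n), dist x x₀ ≠ ρ :=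
    measure_eq_zero_iff_ae_notMem.mp (Measure.addHaar_sphere volume x₀ ρ)
  exact (Measure.quasiMeasurePreserving_fst.ae htime).and
    (Measure.quasiMeasurePreserving_snd.ae hspace)

theorem mem_cyl_iff {z : ℝ × EuclideanSpace ℝ (Fin n)} :
    z ∈ cyl n t₀ x₀ τ ρ ↔ |z.1 - t₀| < τ ∧ dist z.2 x₀ < ρ := by
  rw [cyl, Set.mem_prod, Metric.mem_ball, ← Real.ball_eq_Ioo, Metric.mem_ball, Real.dist_eq]

theorem continuousAt_indicator_cyl {E : Type*} [Zero E] [TopologicalSpace E]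
    {f : ℝ × EuclideanSpace ℝ (Fin n) → E} {z : ℝ × EuclideanSpace ℝ (Fin n)}
    (htime : |z.1 - t₀| ≠ τ) (hspace : dist z.2 x₀ ≠ ρ) :
    ContinuousAt (fun w : ℝ × ℝ => (cyl n t₀ x₀ w.1 w.2).indicator f z) (τ, ρ) := by
  have hfst : Tendsto Prod.fst (𝓝 (τ, ρ)) (𝓝 τ) := continuous_fst.tendsto (τ, ρ)
  have hsnd : Tendsto Prod.snd (𝓝 (τ, ρ)) (𝓝 ρ) := continuous_snd.tendsto (τ, ρ)
  have hlt_time : ∀ᶠ w : ℝ × ℝ in 𝓝 (τ, ρ), |z.1 - t₀| < w.1 ↔ |z.1 - t₀| < τ := by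
    rcases htime.lt_or_gt with h | h
    · filter_upwards [hfst.eventually_const_lt h] with w hw using iff_of_true hw h
    · filter_upwards [hfst.eventually_lt_const h] with w hw using iff_of_false hw.not_gt h.not_gt
  have hlt_space : ∀ᶠ w : ℝ × ℝ in 𝓝 (τ, ρ), dist z.2 x₀ < w.2 ↔ dist z.2 x₀ < ρ := by
    rcases hspace.lt_or_gt with h | h
    · filter_upwards [hsnd.eventually_const_lt h] with w hw using iff_of_true hw h
    · filter_upwards [hsnd.eventually_lt_const h] with w hw using iff_of_false hw.not_gt h.not_gt
  refine (continuousAt_const (y := (cyl n t₀ x₀ τ ρ).indicator f z)).congr ?_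
  filter_upwards [hlt_time, hlt_space] with w hw₁ hw₂
  simp only [Set.indicator, mem_cyl_iff, hw₁, hw₂]

theorem continuous_setIntegral_cyl {E : Type*} [NormedAddCommGroup E] [NormedSpace ℝ E]
    (hn : n ≠ 0) {f : ℝ × EuclideanSpace ℝ (Fin n) → E} (hf : Integrable f) :
    Continuous fun w : ℝ × ℝ => ∫ z in cyl n t₀ x₀ w.1 w.2, f z := by
  simp_rw [← integral_indicator measurableSet_cyl]
  refine continuous_iff_continuousAt.mpr fun w => continuousAt_of_dominated ?_ ?_ hf.norm ?_
  · exact .of_forall fun _ => (hf.indicator measurableSet_cyl).aestronglyMeasurable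
  · exact .of_forall fun _ => .of_forall fun z => norm_indicator_le_norm_self f z
  · filter_upwards [ae_notMem_frontier_cyl hn] with z hz
    exact continuousAt_indicator_cyl hz.1 hz.2

theorem isSuperhomogeneous_rpow_mul_setIntegral_cyl {m : ℝ} (hn : n ≠ 0) (hm : 0 < m)
    {φ : ℝ × EuclideanSpace ℝ (Fin n) → ℝ} (hφ : Integrable φ) (hφ0 : 0 ≤ φ) :
    IsSuperhomogeneous (fun s ρ => ρ ^ m * ∫ z in cyl n t₀ x₀ s ρ, φ z) m where
  continuous := (continuous_snd.rpow_const fun _ => .inr hm.le).mul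
    (continuous_setIntegral_cyl hn hφ)
  nonneg _ _ hρ := mul_nonneg (Real.rpow_nonneg hρ m) (integral_nonneg hφ0)
  apply_mul_le {a a' δ ρ} ha hδ hρ := by
    have hmass : ∫ z in cyl n t₀ x₀ a (δ * ρ), φ z ≤ ∫ z in cyl n t₀ x₀ a' ρ, φ z :=
      setIntegral_mono_set hφ.integrableOn (.of_forall hφ0)
        (cyl_subset_cyl ha (mul_le_of_le_one_left hρ hδ.2)).eventuallyLE
    rw [Real.mul_rpow hδ.1 hρ, mul_assoc]
    exact mul_le_mul_of_nonneg_left (mul_le_mul_of_nonneg_left hmass (Real.rpow_nonneg hρ m))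
      (Real.rpow_nonneg hδ.1 m)

theorem setAverage_cyl_indicator {S R : ℝ} (f : ℝ × EuclideanSpace ℝ (Fin n) → ℝ) (hτ : τ ≤ S)
    (hρ : ρ ≤ R) :
    (⨍ z in cyl n t₀ x₀ τ ρ, (cyl n t₀ x₀ S R).indicator f z) = ⨍ z in cyl n t₀ x₀ τ ρ, f z := by
  rw [setAverage_eq, setAverage_eq, setIntegral_indicator measurableSet_cyl,
    Set.inter_eq_self_of_subset_left (cyl_subset_cyl hτ hρ)]

end Cylinder

section Scaling

variable {n : ℕ} {p s ρ : ℝ}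

/-- The scaling parameter `λ` of the cylinder `Q_{s,ρ}`, defined by `λ ^ (2 - p) = s / ρ ^ 2`. -/
noncomputable def scalingParam (p s ρ : ℝ) : ℝ := (s / ρ ^ 2) ^ (2 - p)⁻¹

/-- The exponent `â = b + 2 / (2p - (2 - p)n)` bounding the growth of the radii from above. -/
noncomputable def growthExponent (n : ℕ) (p b : ℝ) : ℝ := b + 2 / (2 * p - (2 - p) * n)

theorem scalingParam_pos (hs : 0 < s) (hρ : 0 < ρ) : 0 < scalingParam p s ρ := by
  unfold scalingParam
  positivity

theorem scalingParam_rpow_mul (hp : p < 2) (hs : 0 < s) (hρ : 0 < ρ) :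
    scalingParam p s ρ ^ p * (ρ ^ ((2 * p - (2 - p) * n) / (2 - p)) * (s * ρ ^ n)) =
      s ^ (2 / (2 - p)) := by
  have h2p : 2 - p ≠ 0 := (sub_pos.mpr hp).ne'
  have hs_exp : s ^ (2 / (2 - p)) = s ^ ((2 - p)⁻¹ * p) * s := by
    rw [← Real.rpow_add_one hs.ne']
    congr 1
    field_simp
    ring
  have hρ_exp : ρ ^ ((2 * p - (2 - p) * n) / (2 - p)) * ρ ^ n = (ρ ^ 2) ^ ((2 - p)⁻¹ * p) := by
    rw [← Real.rpow_natCast ρ n, ← Real.rpow_add hρ, ← Real.rpow_two, ← Real.rpow_mul hρ.le]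
    congr 1
    field_simp
    ring
  rw [mul_left_comm _ s, hρ_exp, scalingParam, ← Real.rpow_mul (by positivity),
    Real.div_rpow hs.le (by positivity), hs_exp]
  field_simp

variable {t₀ : ℝ} {x₀ : EuclideanSpace ℝ (Fin n)} {f : ℝ × EuclideanSpace ℝ (Fin n) → ℝ}

theorem scalingParam_rpow_mul_setIntegral_cyl (hp : p < 2) (hs : 0 < s) (hρ : 0 < ρ) :
    scalingParam p s ρ ^ p *
        (ρ ^ ((2 * p - (2 - p) * n) / (2 - p)) * ∫ z in cyl n t₀ x₀ s ρ, f z) =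
      volume.real (cyl n 0 0 1 1) * s ^ (2 / (2 - p)) * ⨍ z in cyl n t₀ x₀ s ρ, f z := by
  have hV := volume_real_unit_cyl_pos (n := n)
  rw [setAverage_cyl hs hρ, ← scalingParam_rpow_mul (n := n) hp hs hρ]
  field_simp

theorem setAverage_cyl_le_scalingParam_rpow_iff (hp : p < 2) (hs : 0 < s) (hρ : 0 < ρ) :
    (⨍ z in cyl n t₀ x₀ s ρ, f z) ≤ scalingParam p s ρ ^ p ↔
      ρ ^ ((2 * p - (2 - p) * n) / (2 - p)) * (∫ z in cyl n t₀ x₀ s ρ, f z) ≤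
        volume.real (cyl n 0 0 1 1) * s ^ (2 / (2 - p)) := by
  have hV := volume_real_unit_cyl_pos (n := n)
  have hscale := scalingParam_pos (p := p) hs hρ
  rw [← mul_le_mul_iff_right₀ (Real.rpow_pos_of_pos hscale p) (b := _ * _),
    scalingParam_rpow_mul_setIntegral_cyl hp hs hρ, mul_comm (scalingParam p s ρ ^ p),
    mul_le_mul_iff_right₀ (by positivity)]

theorem scalingParam_rpow_le_setAverage_cyl_iff (hp : p < 2) (hs : 0 < s) (hρ : 0 < ρ) :
    scalingParam p s ρ ^ p ≤ (⨍ z in cyl n t₀ x₀ s ρ, f z) ↔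
      volume.real (cyl n 0 0 1 1) * s ^ (2 / (2 - p)) ≤
        ρ ^ ((2 * p - (2 - p) * n) / (2 - p)) * ∫ z in cyl n t₀ x₀ s ρ, f z := by
  have hV := volume_real_unit_cyl_pos (n := n)
  have hscale := scalingParam_pos (p := p) hs hρ
  rw [← mul_le_mul_iff_right₀ (Real.rpow_pos_of_pos hscale p) (c := _ * _),
    scalingParam_rpow_mul_setIntegral_cyl hp hs hρ, mul_comm (scalingParam p s ρ ^ p),
    mul_le_mul_iff_right₀ (by positivity)]

end Scaling

namespace HasPowerGrowth

variable {r : ℝ → ℝ} {S b e s γ c x : ℝ} {n : ℕ} {t₀ : ℝ} {x₀ : EuclideanSpace ℝ (Fin n)}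

theorem monotoneOn_cyl (hr : HasPowerGrowth r S b e) (hb : 0 < b) :
    MonotoneOn (fun s => cyl n t₀ x₀ s (r s)) (Set.Ioc 0 S) := fun _ hs _ hσ hsσ =>
  cyl_subset_cyl hsσ ((hr.strictMonoOn hb).monotoneOn hs hσ hsσ)

theorem le_mul_rpow_mul (hr : HasPowerGrowth r S b e) (hs : s ∈ Set.Ioc 0 S)
    (hγ : γ ∈ Set.Ioc (0 : ℝ) 1) (hx : x ≤ -e) (hc : 1 ≤ c) : r s ≤ c * γ ^ x * r (γ * s) :=
  (hr.le_rpow_neg_mul hs hγ).trans <| mul_le_mul_of_nonneg_right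
    (rpow_le_mul_rpow_of_exponent_ge hγ hx hc) (hr.pos (mul_mem_Ioc_of_mem_Ioc_one hs hγ)).le

theorem inv_volume_cyl_mul_le (hr : HasPowerGrowth r S b e) (hs : s ∈ Set.Ioc 0 S)
    (hγ : γ ∈ Set.Ioc (0 : ℝ) 1) (hx : x ≤ -(n * e + 1)) (hc : 1 ≤ c) :
    (volume (cyl n t₀ x₀ (γ * s) (r (γ * s))))⁻¹ ≤
      ENNReal.ofReal (c * γ ^ x) * (volume (cyl n t₀ x₀ s (r s)))⁻¹ :=
  (inv_volume_cyl_le hγ.1 hs.1 (hr.pos hs) (hr.pos (mul_mem_Ioc_of_mem_Ioc_one hs hγ))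
    (hr.rpow_mul_le hs hγ)).trans <|
      mul_le_mul_left (ENNReal.ofReal_le_ofReal (rpow_le_mul_rpow_of_exponent_ge hγ hx hc)) _

theorem mul_div_sq_le (hr : HasPowerGrowth r S b e) (hs : s ∈ Set.Ioc 0 S)
    (hγ : γ ∈ Set.Ioc (0 : ℝ) 1) (hx : x ≤ 1 - 2 * e) (hc : 1 ≤ c) :
    γ * s / r (γ * s) ^ 2 ≤ c * γ ^ x * (s / r s ^ 2) :=
  (mul_div_sq_le_rpow_mul hγ.1 hs.1.le (hr.pos hs) (hr.rpow_mul_le hs hγ)).trans <|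
    mul_le_mul_of_nonneg_right (rpow_le_mul_rpow_of_exponent_ge hγ hx hc)
      (div_nonneg hs.1.le (sq_nonneg _))

theorem cyl_dilation_subset (hr : HasPowerGrowth r S b e) (hb : 0 < b) (hb1 : b ≤ 1)
    (hs : 0 < s) (hc : 1 ≤ c) (hcS : c ^ (1 / b) * s ≤ S) :
    cyl n t₀ x₀ (c * s) (c * r s) ⊆ cyl n t₀ x₀ (c ^ (1 / b) * s) (r (c ^ (1 / b) * s)) := by
  have hexp : (c ^ (1 / b)) ^ b = c := by
    rw [one_div, Real.rpow_inv_rpow (zero_le_one.trans hc) hb.ne']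
  have hradius := hr.rpow_mul_le_of_one_le hs
    (Real.one_le_rpow hc (one_div_nonneg.mpr hb.le)) hcS
  rw [hexp] at hradius
  refine cyl_subset_cyl (mul_le_mul_of_nonneg_right ?_ hs.le) hradius
  exact Real.self_le_rpow_of_one_le hc (one_le_one_div hb hb1)

theorem cyl_subset_dilation {μ : ℝ} (hr : HasPowerGrowth r S b e) (hs : s ∈ Set.Ioc 0 S)
    (hμ : 1 ≤ μ) (hμS : μ * s ≤ S) :
    cyl n t₀ x₀ (μ * s) (r (μ * s)) ⊆
      cyl n t₀ x₀ (max μ (μ ^ e) * s) (max μ (μ ^ e) * r s) :=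
  cyl_subset_cyl (mul_le_mul_of_nonneg_right (le_max_left _ _) hs.1.le) <|
    (hr.apply_mul_le_of_one_le hs.1 hμ hμS).trans <|
      mul_le_mul_of_nonneg_right (le_max_right _ _) (hr.pos hs).le

theorem div_sq_le_of_forall_not {σ s₁ : ℝ} {P : ℝ → Prop}
    (hr : HasPowerGrowth r S b e) (hb : 0 < b)
    (hP : ∀ s σ, 0 < s → s < σ → σ ≤ S → r s < (s / σ) ^ b * r σ → ∃ a ∈ Set.Ico s σ, P a)
    (hs₁ : 0 < s₁) (hs₁σ : s₁ < σ) (hσ : σ ≤ S) (hnot : ∀ a ∈ Set.Ioo s₁ σ, ¬P a) :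
    ∀ a ∈ Set.Icc s₁ σ, a / r a ^ 2 ≤ (a / σ) ^ (1 - 2 * b) * (σ / r σ ^ 2) := by
  have hσ0 := hs₁.trans hs₁σ
  have hgrowth := hr.div_rpow_mul_le_of_forall_Ioo hb hs₁ hs₁σ hσ fun a ha => by
    by_contra! hlt
    obtain ⟨a', ha', hPa'⟩ := hP a σ (hs₁.trans ha.1) ha.2 hσ hlt
    exact hnot a' ⟨ha.1.trans_le ha'.1, ha'.2⟩ hPa'
  intro a ha
  have hle := mul_div_sq_le_rpow_mul (div_pos (hs₁.trans_le ha.1) hσ0) hσ0.le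
    (hr.pos ⟨hσ0, hσ⟩) (hgrowth a ha)
  rwa [div_mul_cancel₀ _ hσ0.ne'] at hle

end HasPowerGrowth

section SubintrinsicRadius

variable {n : ℕ} {p : ℝ}

theorem exists_subintrinsic_radius_of_integrable (hn : n ≠ 0)
    (hp1 : 0 < 2 * p - (2 - p) * n) (hp2 : p < 2) (t₀ : ℝ) (x₀ : EuclideanSpace ℝ (Fin n))
    {S R b : ℝ} (hR : 0 < R) (hb : 0 < b) {φ : ℝ × EuclideanSpace ℝ (Fin n) → ℝ}
    (hφ : Integrable φ) (hφ0 : 0 ≤ φ) :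
    ∃ r : ℝ → ℝ, HasPowerGrowth r S b (growthExponent n p b) ∧
      (∀ s ∈ Set.Ioc 0 S, r s ≤ R) ∧
      (∀ s ∈ Set.Ioc 0 S, (⨍ z in cyl n t₀ x₀ s (r s), φ z) ≤ scalingParam p s (r s) ^ p) ∧
      (∀ s σ : ℝ, 0 < s → s < σ → σ ≤ S → r s < (s / σ) ^ b * r σ →
        ∃ a ∈ Set.Ico s σ, scalingParam p a (r a) ^ p ≤ ⨍ z in cyl n t₀ x₀ a (r a), φ z) := by
  have h2p : 0 < 2 - p := sub_pos.mpr hp2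
  have hm : 0 < (2 * p - (2 - p) * n) / (2 - p) := div_pos hp1 h2p
  have hk : 0 < 2 / (2 - p) := div_pos two_pos h2p
  have hV : 0 < volume.real (cyl n 0 0 1 1) := volume_real_unit_cyl_pos
  have hh := isSuperhomogeneous_rpow_mul_setIntegral_cyl (t₀ := t₀) (x₀ := x₀) hn hm hφ hφ0
  have hr := hasPowerGrowth_criticalRadius (S := S) hh hm hV hk hb hR
  rw [div_div_div_cancel_right₀ h2p.ne'] at hr
  refine ⟨_, hr, fun s hs => criticalRadius_le hh hm hV hb hR hs, fun s hs => ?_,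
    fun s σ hs hsσ hσ hlt => ?_⟩
  · exact (setAverage_cyl_le_scalingParam_rpow_iff hp2 hs.1 (hr.pos hs)).mpr
      (apply_criticalRadius_le hh hm hV hb hR hs)
  · obtain ⟨a, ha, hle⟩ := exists_le_apply_criticalRadius hh hm hV hk hb hR hs hsσ hσ hlt
    have ha0 : 0 < a := hs.trans_le ha.1
    exact ⟨a, ha, (scalingParam_rpow_le_setAverage_cyl_iff hp2 ha0
      (hr.pos ⟨ha0, ha.2.le.trans hσ⟩)).mpr hle⟩

theorem exists_subintrinsic_radius {E : Type*} [NormedAddCommGroup E] (hn : n ≠ 0)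
    (hp1 : 0 < 2 * p - (2 - p) * n) (hp2 : p < 2) {t₀ : ℝ} {x₀ : EuclideanSpace ℝ (Fin n)}
    {S R b : ℝ} (hR : 0 < R) (hb : 0 < b) {f : ℝ × EuclideanSpace ℝ (Fin n) → E}
    (hf : IntegrableOn f (cyl n t₀ x₀ S R)) :
    ∃ r : ℝ → ℝ, HasPowerGrowth r S b (growthExponent n p b) ∧
      (∀ s ∈ Set.Ioc 0 S, r s ≤ R) ∧
      (∀ s ∈ Set.Ioc 0 S,
        (⨍ z in cyl n t₀ x₀ s (r s), ‖f z‖) ≤ scalingParam p s (r s) ^ p) ∧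
      (∀ s σ : ℝ, 0 < s → s < σ → σ ≤ S → r s < (s / σ) ^ b * r σ →
        ∃ a ∈ Set.Ico s σ,
          scalingParam p a (r a) ^ p ≤ ⨍ z in cyl n t₀ x₀ a (r a), ‖f z‖) := by
  obtain ⟨r, hr, hrR, hsub, hint⟩ := exists_subintrinsic_radius_of_integrable (S := S) hn hp1 hp2
    t₀ x₀ hR hb ((integrable_indicator_iff measurableSet_cyl).mpr hf.norm)
    (Set.indicator_nonneg fun z _ => norm_nonneg (f z))
  have haverage : ∀ s ∈ Set.Ioc 0 S,
      (⨍ z in cyl n t₀ x₀ s (r s), (cyl n t₀ x₀ S R).indicator (fun z => ‖f z‖) z) =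
        ⨍ z in cyl n t₀ x₀ s (r s), ‖f z‖ :=
    fun s hs => setAverage_cyl_indicator _ hs.2 (hrR s hs)
  refine ⟨r, hr, hrR, fun s hs => haverage s hs ▸ hsub s hs, fun s σ hs hsσ hσ hlt => ?_⟩
  obtain ⟨a, ha, hle⟩ := hint s σ hs hsσ hσ hlt
  exact ⟨a, ha, haverage a ⟨hs.trans_le ha.1, ha.2.le.trans hσ⟩ ▸ hle⟩

end SubintrinsicRadius

theorem stmt_11_general {n : ℕ} (hn : n ≠ 0) {p : ℝ} (hp1 : (2 * n : ℝ) / (n + 2) < p)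
    (hp2 : p < 2) {E : Type*} [NormedAddCommGroup E] {t₀ : ℝ} {x₀ : EuclideanSpace ℝ (Fin n)}
    {S R : ℝ} (hR : 0 < R) {f : ℝ × EuclideanSpace ℝ (Fin n) → E}
    (hf : IntegrableOn f (cyl n t₀ x₀ S R)) {b : ℝ} (hb : 0 < b) (hb1 : b ≤ 1)
    {c K : ℝ} (hc : 1 ≤ c) (hK : 1 ≤ K) :
    ∃ r : ℝ → ℝ,
      (∀ s ∈ Set.Ioc 0 S, 0 < r s ∧ r s ≤ R) ∧
      ContinuousOn r (Set.Ioc 0 S) ∧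
      StrictMonoOn r (Set.Ioc 0 S) ∧
      Tendsto r (𝓝[Set.Ioc 0 S] 0) (𝓝 0) ∧
      (∀ s σ : ℝ, 0 < s → s < σ → σ ≤ S →
        r s ≤ (s / σ) ^ b * r σ ∧ cyl n t₀ x₀ s (r s) ⊆ cyl n t₀ x₀ σ (r σ)) ∧
      (∀ s ∈ Set.Ioc 0 S,
        (⨍ z in cyl n t₀ x₀ s (r s), ‖f z‖) ≤ scalingParam p s (r s) ^ p) ∧
      (∀ s σ : ℝ, 0 < s → s < σ → σ ≤ S → r s < (s / σ) ^ b * r σ →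
        ∃ s₁ ∈ Set.Ico s σ,
          scalingParam p s₁ (r s₁) ^ p ≤ K * ⨍ z in cyl n t₀ x₀ s₁ (r s₁), ‖f z‖) ∧
      (∀ s σ s₁ : ℝ, 0 < s → s < σ → σ ≤ S → s ≤ s₁ → s₁ < σ →
        (∀ a ∈ Set.Ioo s₁ σ,
          (⨍ z in cyl n t₀ x₀ a (r a), ‖f z‖) < scalingParam p a (r a) ^ p / K) →
        ∀ a ∈ Set.Icc s₁ σ, a / r a ^ 2 ≤ (a / σ) ^ (1 - 2 * b) * (σ / r σ ^ 2)) ∧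
      (∀ s ∈ Set.Ioc 0 S, ∀ γ ∈ Set.Ioc (0 : ℝ) 1,
        r s ≤ c * γ ^ (-growthExponent n p b) * r (γ * s) ∧
        (volume (cyl n t₀ x₀ (γ * s) (r (γ * s))))⁻¹ ≤
          ENNReal.ofReal (c * γ ^ (-(n * growthExponent n p b + 2))) *
            (volume (cyl n t₀ x₀ s (r s)))⁻¹ ∧
        γ * s / r (γ * s) ^ 2 ≤
          c * γ ^ (-max (2 * growthExponent n p b) (1 - 2 * b)) * (s / r s ^ 2)) ∧
      (∀ s ∈ Set.Ioc 0 S, ∀ c' : ℝ, 1 < c' → c' ^ (1 / b) * s ≤ S →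
        cyl n t₀ x₀ (c' * s) (c' * r s) ⊆
          cyl n t₀ x₀ (c' ^ (1 / b) * s) (r (c' ^ (1 / b) * s)) ∧
        cyl n t₀ x₀ (c' ^ (1 / b) * s) (r (c' ^ (1 / b) * s)) ⊆
          cyl n t₀ x₀ (max (c' ^ (1 / b)) ((c' ^ (1 / b)) ^ growthExponent n p b) * s)
            (max (c' ^ (1 / b)) ((c' ^ (1 / b)) ^ growthExponent n p b) * r s)) := by
  have hd : 0 < 2 * p - (2 - p) * n := by
    rw [div_lt_iff₀ (by positivity)] at hp1
    linarith
  obtain ⟨r, hr, hrR, hsub, hint⟩ := exists_subintrinsic_radius hn hd hp2 hR hb hf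
  have hintK (s σ : ℝ) (hs : 0 < s) (hsσ : s < σ) (hσ : σ ≤ S) (hlt : r s < (s / σ) ^ b * r σ) :
      ∃ a ∈ Set.Ico s σ,
        scalingParam p a (r a) ^ p ≤ K * ⨍ z in cyl n t₀ x₀ a (r a), ‖f z‖ := by
    obtain ⟨a, ha, hle⟩ := hint s σ hs hsσ hσ hlt
    exact ⟨a, ha, hle.trans
      (le_mul_of_one_le_left (integral_nonneg fun _ => norm_nonneg _) hK)⟩
  refine ⟨r, fun s hs => ⟨hr.pos hs, hrR s hs⟩, hr.continuousOn, hr.strictMonoOn hb,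
    hr.tendsto_zero hb, fun s σ hs hsσ hσ => ⟨hr.le_div_rpow_mul hs hsσ.le hσ,
      hr.monotoneOn_cyl hb ⟨hs, hsσ.le.trans hσ⟩ ⟨hs.trans hsσ, hσ⟩ hsσ.le⟩, hsub, hintK,
    fun s σ s₁ hs _ hσ hss₁ hs₁σ hlt => hr.div_sq_le_of_forall_not hb hintK (hs.trans_le hss₁)
      hs₁σ hσ fun a ha => ((lt_div_iff₀' (one_pos.trans_le hK)).mp (hlt a ha)).not_ge,
    fun s hs γ hγ => ⟨?_, ?_, ?_⟩, fun s hs c' hc' hc'S => ⟨hr.cyl_dilation_subset hb hb1 hs.1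
      hc'.le hc'S, hr.cyl_subset_dilation hs
        (Real.one_le_rpow hc'.le (one_div_nonneg.mpr hb.le)) hc'S⟩⟩
  · exact hr.le_mul_rpow_mul hs hγ le_rfl hc
  · exact hr.inv_volume_cyl_mul_le hs hγ (by linarith) hc
  · refine hr.mul_div_sq_le hs hγ ?_ hc
    linarith [le_max_left (2 * growthExponent n p b) (1 - 2 * b)]

/-- Construction of a nested family of sub-intrinsic cylinders with respect to
`f ∈ L¹(Q_{S,R})`, with scaling parameters `λ_s` given by `λ_s^{2-p} = s / r(s)²`
(so `λ_s = (s / r(s)²)^{1/(2-p)}`), for `p ∈ (2n/(n+2), 2)`. -/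
theorem stmt_11 (n : ℕ) (hn : 2 ≤ n) (p : ℝ)
    (hp1 : (2 * n : ℝ) / (n + 2) < p) (hp2 : p < 2) :
    ∃ c K : ℝ, 1 < c ∧ 1 ≤ K ∧
      ∀ (t₀ : ℝ) (x₀ : EuclideanSpace ℝ (Fin n)) (S R : ℝ), 0 < S → 0 < R →
      ∀ f : ℝ × EuclideanSpace ℝ (Fin n) → ℝ,
        IntegrableOn f (cyl n t₀ x₀ S R) →
      ∀ b : ℝ, 0 < b → b ≤ 1 / 2 → b < (n + 2) * p - 2 * n →
      ∃ r : ℝ → ℝ,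
        -- (a) range, monotonicity, continuity, decay of `r`, and nestedness
        (∀ s ∈ Set.Ioc (0 : ℝ) S, 0 < r s ∧ r s ≤ R) ∧
        ContinuousOn r (Set.Ioc 0 S) ∧
        StrictMonoOn r (Set.Ioc 0 S) ∧
        Filter.Tendsto r (nhdsWithin 0 (Set.Ioc 0 S)) (nhds 0) ∧
        (∀ s σ : ℝ, 0 < s → s < σ → σ ≤ S →
          r s ≤ (s / σ) ^ b * r σ ∧
            cyl n t₀ x₀ s (r s) ⊆ cyl n t₀ x₀ σ (r σ)) ∧
        -- (b) every cylinder is sub-intrinsic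
        (∀ s ∈ Set.Ioc (0 : ℝ) S,
          (⨍ z in cyl n t₀ x₀ s (r s), |f z|) ≤
            ((s / (r s) ^ 2) ^ (2 - p)⁻¹) ^ p) ∧
        -- (c) if the growth bound is strict, some intermediate cylinder is `K`-intrinsic
        (∀ s σ : ℝ, 0 < s → s < σ → σ ≤ S → r s < (s / σ) ^ b * r σ →
          ∃ s₁ ∈ Set.Ico s σ,
            ((s₁ / (r s₁) ^ 2) ^ (2 - p)⁻¹) ^ p ≤
              K * ⨍ z in cyl n t₀ x₀ s₁ (r s₁), |f z|) ∧
        -- (d) strict sub-intrinsicality on `(s₁, σ)` forces decay of `λ^{2-p} = s/r(s)²`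
        (∀ s σ s₁ : ℝ, 0 < s → s < σ → σ ≤ S → s ≤ s₁ → s₁ < σ →
          (∀ a ∈ Set.Ioo s₁ σ,
            (⨍ z in cyl n t₀ x₀ a (r a), |f z|) <
              ((a / (r a) ^ 2) ^ (2 - p)⁻¹) ^ p / K) →
          ∀ a ∈ Set.Icc s₁ σ,
            a / (r a) ^ 2 ≤ (a / σ) ^ (1 - 2 * b) * (σ / (r σ) ^ 2)) ∧
        -- (e) quantitative control when shrinking the time-height by `γ ∈ (0,1]`
        (∀ s ∈ Set.Ioc (0 : ℝ) S, ∀ γ ∈ Set.Ioc (0 : ℝ) 1,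
          r s ≤ c * γ ^ (-(b + 2 / (2 * p - (2 - p) * n))) * r (γ * s) ∧
          (volume (cyl n t₀ x₀ (γ * s) (r (γ * s))))⁻¹ ≤
            ENNReal.ofReal (c * γ ^ (-(n * (b + 2 / (2 * p - (2 - p) * n)) + 2))) *
              (volume (cyl n t₀ x₀ s (r s)))⁻¹ ∧
          γ * s / (r (γ * s)) ^ 2 ≤
            c * γ ^ (-(max (2 * (b + 2 / (2 * p - (2 - p) * n))) (1 - 2 * b))) *
              (s / (r s) ^ 2)) ∧
        -- (f) engulfing of dilated cylinders, with `c̃ = c'^{1/b}`, `c̄ = max{c̃, c̃^â}`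
        (∀ s ∈ Set.Ioc (0 : ℝ) S, ∀ c' : ℝ, 1 < c' → c' ^ (1 / b) * s ≤ S →
          cyl n t₀ x₀ (c' * s) (c' * r s) ⊆
            cyl n t₀ x₀ (c' ^ (1 / b) * s) (r (c' ^ (1 / b) * s)) ∧
          cyl n t₀ x₀ (c' ^ (1 / b) * s) (r (c' ^ (1 / b) * s)) ⊆
            cyl n t₀ x₀
              (max (c' ^ (1 / b)) ((c' ^ (1 / b)) ^ (b + 2 / (2 * p - (2 - p) * n))) * s)
              (max (c' ^ (1 / b)) ((c' ^ (1 / b)) ^ (b + 2 / (2 * p - (2 - p) * n))) *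
                r s)) := by
  exact ⟨2, 1, one_lt_two, le_rfl, fun t₀ x₀ S R _ hR f hf b hb hb2 _ =>
    stmt_11_general (by omega) hp1 hp2 hR hf hb (by linarith) one_le_two le_rfl⟩
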